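/- For every real number x > 1 and every complex number z, the Dirichlet series ∑_{n=1}^{∞} α_n(z)/n^x equals ζ(x)^z = exp(z·ln ζ(x)), where ζ(x) = ∑_{n=1}^{∞} n^{−x} is a real number greater than 1, ln is the real natural logarithm, and ζ(x)^z denotes the complex power of the positive real base ζ(x). -/

import Mathlib

/-!
The series has an Euler product. The function `n ↦ α_n(z) n^{-x}` is multiplicative, and its local
factor at a prime `p` is the binomial series
`∑_k [z;k] p^{-kx} = (1 - p^{-x})^{-z} = exp (z * (-log (1 - p^{-x})))` (`hasSum_poch`).
The product of these factors over all primes is `exp (z * ∑_p -log (1 - p^{-x}))`, and the Euler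
product of `ζ` identifies `∑_p -log (1 - p^{-x})` with `log ζ(x)` (`tsum_primes_neg_log`).

The Euler product requires absolute convergence (`summable_norm_sigTerm`). Since
`|[z;k]| ≤ [|z|;k]`, the sum of `|α_n(z)| n^{-x}` over `N`-smooth `n` is at most
`∏_{p < N} (1 - p^{-x})^{-|z|}`, which is bounded independently of `N` because
`∑_n -log (1 - n^{-x})` converges.
-/

open Finset

/-- The Pochhammer polynomial `[z;k] = (1/k!) * ∏_{i=0}^{k-1} (z+i)`, with `[z;0] = 1`. -/
noncomputable def poch (z : ℂ) (k : ℕ) : ℂ :=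
  ((k.factorial : ℂ))⁻¹ * ∏ i ∈ Finset.range k, (z + i)

/-- The prime-signature polynomial `α_n(z) = ∏_{p^k ∥ n} [z;k]`, with `α_1(z) = 1`. -/
noncomputable def alphaSig (n : ℕ) (z : ℂ) : ℂ :=
  ∏ p ∈ n.primeFactors, poch z (n.factorization p)

lemma poch_eq_choose (z : ℂ) (k : ℕ) : poch z k = Ring.choose (z + k - 1) k := by
  have h1 : Ring.choose (z + k - 1) k = Ring.multichoose z k := by
    rw [Ring.choose]; congr 1; ring
  have h2 := Ring.factorial_nsmul_multichoose_eq_ascPochhammer z k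
  rw [Polynomial.ascPochhammer_smeval_eq_eval, nsmul_eq_mul] at h2
  have h3 : (ascPochhammer ℂ k).eval z = ∏ i ∈ Finset.range k, (z + i) := by
    clear h1 h2
    induction k with
    | zero => simp
    | succ k ih => rw [ascPochhammer_succ_eval, ih, Finset.prod_range_succ]
  have h4 : (k.factorial : ℂ) ≠ 0 := by exact_mod_cast k.factorial_ne_zero
  rw [h1, poch, ← h3, ← h2, inv_mul_cancel_left₀ h4]

/-- The binomial series `∑ [z;k] w^k = (1 - w)^{-z}`. -/
lemma hasSum_poch (z : ℂ) {w : ℝ} (h0 : 0 ≤ w) (h1 : w < 1) :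
    HasSum (fun k ↦ poch z k * ((w ^ k : ℝ) : ℂ))
      (Complex.exp (z * ((-Real.log (1 - w) : ℝ) : ℂ))) := by
  have hw : (w : ℂ) ∈ Metric.eball (0 : ℂ) 1 := by
    rw [Metric.mem_eball, edist_zero_right]
    rw [← ofReal_norm]
    simpa [abs_of_nonneg h0] using h1
  have h := (Complex.one_div_one_sub_cpow_hasFPowerSeriesOnBall_zero z).hasSum hw
  have hne : (1 - (w : ℂ)) ≠ 0 := by
    have : (1 - w : ℝ) ≠ 0 := by linarith
    exact_mod_cast this
  convert! h using 1
  · funext k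
    simp [FormalMultilinearSeries.ofScalars, poch_eq_choose]
  · rw [zero_add, Complex.cpow_def_of_ne_zero hne, one_div, ← Complex.exp_neg]
    congr 1
    rw [Complex.ofReal_neg, Complex.ofReal_log (by linarith)]
    push_cast
    ring

lemma poch_ofReal_norm (r : ℝ) (hr : 0 ≤ r) (k : ℕ) :
    poch (r : ℂ) k = ((‖poch (r : ℂ) k‖ : ℝ) : ℂ) := by
  have h : poch (r : ℂ) k =
      (((k.factorial : ℝ)⁻¹ * ∏ i ∈ Finset.range k, (r + i) : ℝ) : ℂ) := by
    simp [poch]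
  have h' : 0 ≤ (k.factorial : ℝ)⁻¹ * ∏ i ∈ Finset.range k, (r + i) :=
    mul_nonneg (by positivity) (Finset.prod_nonneg fun i _ ↦ by positivity)
  rw [h, Complex.norm_of_nonneg h']

lemma norm_poch_le (z : ℂ) (k : ℕ) : ‖poch z k‖ ≤ ‖poch (‖z‖ : ℂ) k‖ := by
  rw [poch, poch, norm_mul, norm_mul, norm_prod, norm_prod]
  gcongr with i
  have h : (‖z‖ : ℂ) + i = ((‖z‖ + i : ℝ) : ℂ) := by push_cast; rfl
  rw [h, Complex.norm_of_nonneg (by positivity)]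
  simpa using norm_add_le z (i : ℂ)

lemma hasSum_norm_poch (r : ℝ) (hr : 0 ≤ r) {w : ℝ} (h0 : 0 ≤ w) (h1 : w < 1) :
    HasSum (fun k ↦ ‖poch (r : ℂ) k‖ * w ^ k) (Real.exp (r * -Real.log (1 - w))) := by
  rw [← Complex.hasSum_ofReal]
  have h := hasSum_poch r h0 h1
  push_cast at h ⊢
  convert h using 3 with k
  exact (poch_ofReal_norm r hr k).symm

lemma alphaSig_mul (z : ℂ) {m n : ℕ} (h : m.Coprime n) :
    alphaSig (m * n) z = alphaSig m z * alphaSig n z := by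
  rw [alphaSig, h.primeFactors_mul, Finset.prod_union h.disjoint_primeFactors]
  congr 1
  · exact Finset.prod_congr rfl fun p hp ↦ by
      rw [Nat.factorization_eq_of_coprime_left h (Nat.mem_primeFactors_iff_mem_primeFactorsList.1 hp)]
  · exact Finset.prod_congr rfl fun p hp ↦ by
      rw [Nat.factorization_eq_of_coprime_right h
        (Nat.mem_primeFactors_iff_mem_primeFactorsList.1 hp)]

lemma alphaSig_prime_pow (z : ℂ) {p : ℕ} (hp : p.Prime) (k : ℕ) :
    alphaSig (p ^ k) z = poch z k := by
  rcases Nat.eq_zero_or_pos k with rfl | hk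
  · simp [alphaSig, poch]
  · simp [alphaSig, Nat.primeFactors_prime_pow hk.ne' hp, hp.factorization]

/-- The summand `α_n(z) n^{-x}`; for `x ≠ 0` its value at `n = 0` is `0`. -/
noncomputable def sigTerm (x : ℝ) (z : ℂ) (n : ℕ) : ℂ :=
  alphaSig n z * (((n : ℝ) ^ (-x) : ℝ) : ℂ)

lemma sigTerm_zero {x : ℝ} (hx : 1 < x) (z : ℂ) : sigTerm x z 0 = 0 := by
  simp [sigTerm, Real.zero_rpow (by linarith : -x ≠ 0)]

lemma sigTerm_one (x : ℝ) (z : ℂ) : sigTerm x z 1 = 1 := by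
  simp [sigTerm, alphaSig]

lemma sigTerm_mul (x : ℝ) (z : ℂ) {m n : ℕ} (h : m.Coprime n) :
    sigTerm x z (m * n) = sigTerm x z m * sigTerm x z n := by
  rw [sigTerm, sigTerm, sigTerm, alphaSig_mul z h, Nat.cast_mul,
    Real.mul_rpow (by positivity) (by positivity)]
  push_cast
  ring

lemma sigTerm_prime_pow (x : ℝ) (z : ℂ) {p : ℕ} (hp : p.Prime) (k : ℕ) :
    sigTerm x z (p ^ k) = poch z k * ((((p : ℝ) ^ (-x)) ^ k : ℝ) : ℂ) := by
  rw [sigTerm, alphaSig_prime_pow z hp, Nat.cast_pow, ← Real.rpow_natCast, ← Real.rpow_natCast,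
    ← Real.rpow_mul (by positivity), ← Real.rpow_mul (by positivity), mul_comm (k : ℝ)]

lemma rpow_neg_lt_one {x : ℝ} (hx : 1 < x) {p : ℕ} (hp : p.Prime) : (p : ℝ) ^ (-x) < 1 :=
  Real.rpow_lt_one_of_one_lt_of_neg (by exact_mod_cast hp.one_lt) (by linarith)

/-- Over all `n`, not only primes: the junk value `log 0 = 0` makes the term at `n = 1` vanish. -/
lemma summable_neg_log {x : ℝ} (hx : 1 < x) :
    Summable fun n : ℕ ↦ -Real.log (1 - (n : ℝ) ^ (-x)) := by
  have h : Summable fun n : ℕ ↦ (n : ℝ) ^ (-x) := Real.summable_nat_rpow.2 (by linarith)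
  simpa [sub_eq_add_neg] using (Real.summable_log_one_add_of_summable h.neg).neg

lemma neg_log_nonneg {x : ℝ} (hx : 1 < x) (n : ℕ) : 0 ≤ -Real.log (1 - (n : ℝ) ^ (-x)) := by
  have h0 : 0 ≤ (n : ℝ) ^ (-x) := by positivity
  have h1 : (n : ℝ) ^ (-x) ≤ 1 := by
    rcases Nat.eq_zero_or_pos n with rfl | hn
    · simp [Real.zero_rpow (by linarith : -x ≠ 0)]
    · exact Real.rpow_le_one_of_one_le_of_nonpos (by exact_mod_cast hn) (by linarith)
  have := Real.log_nonpos (by linarith : 0 ≤ 1 - (n : ℝ) ^ (-x)) (by linarith)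
  linarith

lemma norm_sigTerm_prime_pow_le (x : ℝ) (z : ℂ) {p : ℕ} (hp : p.Prime) (k : ℕ) :
    ‖sigTerm x z (p ^ k)‖ ≤ ‖poch (‖z‖ : ℂ) k‖ * ((p : ℝ) ^ (-x)) ^ k := by
  rw [sigTerm_prime_pow x z hp, norm_mul, Complex.norm_of_nonneg (by positivity)]
  gcongr
  exact norm_poch_le z k

lemma summable_norm_sigTerm {x : ℝ} (hx : 1 < x) (z : ℂ) :
    Summable fun n ↦ ‖sigTerm x z n‖ := by
  have hloc {p : ℕ} (hp : p.Prime) :=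
    hasSum_norm_poch ‖z‖ (norm_nonneg z) (w := (p : ℝ) ^ (-x)) (by positivity)
      (rpow_neg_lt_one hx hp)
  have hs {p : ℕ} (hp : p.Prime) : Summable fun k : ℕ ↦ ‖sigTerm x z (p ^ k)‖ :=
    (hloc hp).summable.of_nonneg_of_le (fun _ ↦ norm_nonneg _) (norm_sigTerm_prime_pow_le x z hp)
  refine summable_of_sum_range_le
    (c := Real.exp (‖z‖ * ∑' n : ℕ, -Real.log (1 - (n : ℝ) ^ (-x)))) (fun _ ↦ norm_nonneg _) ?_
  intro N
  obtain ⟨hsm, hsum⟩ := EulerProduct.summable_and_hasSum_smoothNumbers_prod_primesBelow_tsum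
    (f := fun n ↦ ‖sigTerm x z n‖) (by simp [sigTerm_one])
    (fun h ↦ by rw [sigTerm_mul x z h, norm_mul]) (fun hp ↦ by simpa using hs hp) N
  simp only [norm_norm] at hsm
  -- Every `0 < n < N` is `N`-smooth, and the term at `0` vanishes.
  have hle : ∑ n ∈ Finset.range N, ‖sigTerm x z n‖ ≤ ∑' m : N.smoothNumbers, ‖sigTerm x z m‖ := by
    rw [tsum_subtype N.smoothNumbers (fun n ↦ ‖sigTerm x z n‖)]
    have hi : Summable (Set.indicator N.smoothNumbers fun n ↦ ‖sigTerm x z n‖) :=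
      summable_subtype_iff_indicator.1 hsm
    refine le_trans (Finset.sum_le_sum fun n hn ↦ ?_)
      (hi.sum_le_tsum (Finset.range N) fun n _ ↦ Set.indicator_nonneg (fun _ _ ↦ norm_nonneg _) n)
    rcases Nat.eq_zero_or_pos n with rfl | hpos
    · rw [sigTerm_zero hx, norm_zero]
      exact Set.indicator_nonneg (fun _ _ ↦ norm_nonneg _) 0
    · rw [Set.indicator_of_mem (Nat.mem_smoothNumbers_of_lt hpos (Finset.mem_range.1 hn))]
  refine hle.trans ?_
  rw [hsum.tsum_eq]
  calc ∏ p ∈ N.primesBelow, ∑' k : ℕ, ‖sigTerm x z (p ^ k)‖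
      ≤ ∏ p ∈ N.primesBelow, Real.exp (‖z‖ * -Real.log (1 - (p : ℝ) ^ (-x))) := by
        refine Finset.prod_le_prod (fun p _ ↦ tsum_nonneg fun _ ↦ norm_nonneg _) fun p hp ↦ ?_
        have hp' := Nat.prime_of_mem_primesBelow hp
        rw [← (hloc hp').tsum_eq]
        exact (hs hp').tsum_le_tsum (norm_sigTerm_prime_pow_le x z hp') (hloc hp').summable
    _ = Real.exp (‖z‖ * ∑ p ∈ N.primesBelow, -Real.log (1 - (p : ℝ) ^ (-x))) := by
        rw [← Real.exp_sum, Finset.mul_sum]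
    _ ≤ _ := by
        gcongr
        exact (summable_neg_log hx).sum_le_tsum _ fun n _ ↦ neg_log_nonneg hx n

lemma tsum_sigTerm {x : ℝ} (hx : 1 < x) (z : ℂ) :
    ∑' n, sigTerm x z n =
      Complex.exp (z * ((∑' p : Nat.Primes, -Real.log (1 - (p : ℝ) ^ (-x)) : ℝ) : ℂ)) := by
  have h1 := EulerProduct.eulerProduct_hasProd (sigTerm_one x z) (sigTerm_mul x z)
    (summable_norm_sigTerm hx z) (sigTerm_zero hx z)
  have hs : Summable fun p : Nat.Primes ↦ -Real.log (1 - (p : ℝ) ^ (-x)) :=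
    (summable_neg_log hx).subtype Nat.Prime
  have h2 := ((Complex.hasSum_ofReal.2 hs.hasSum).mul_left z).cexp
  refine h1.unique ?_
  convert h2 using 2 with p
  simp only [sigTerm_prime_pow x z p.2]
  exact (hasSum_poch z (by positivity) (rpow_neg_lt_one hx p.2)).tsum_eq

lemma summable_zeta {x : ℝ} (hx : 1 < x) : Summable fun n : ℕ ↦ ((n : ℝ) + 1) ^ (-x) := by
  have h : Summable fun n : ℕ ↦ (n : ℝ) ^ (-x) := Real.summable_nat_rpow.2 (by linarith)
  simpa using (summable_nat_add_iff 1).2 h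

lemma one_lt_zeta {x : ℝ} (hx : 1 < x) : 1 < ∑' n : ℕ, ((n : ℝ) + 1) ^ (-x) := by
  have h := (summable_zeta hx).sum_le_tsum (Finset.range 2) fun n _ ↦ by positivity
  have h2 : (0 : ℝ) < (1 + 1) ^ (-x) := by positivity
  simp [Finset.sum_range_succ] at h
  linarith

lemma tsum_primes_neg_log {x : ℝ} (hx : 1 < x) :
    ∑' p : Nat.Primes, -Real.log (1 - (p : ℝ) ^ (-x)) =
      Real.log (∑' n : ℕ, ((n : ℝ) + 1) ^ (-x)) := by
  have hre : 1 < (x : ℂ).re := by simpa using hx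
  have h := riemannZeta_eulerProduct_exp_log hre
  rw [zeta_eq_tsum_one_div_nat_add_one_cpow hre] at h
  have hl : ∑' p : Nat.Primes, -Complex.log (1 - (p : ℂ) ^ (-(x : ℂ))) =
      ((∑' p : Nat.Primes, -Real.log (1 - (p : ℝ) ^ (-x)) : ℝ) : ℂ) := by
    rw [Complex.ofReal_tsum]
    refine tsum_congr fun p ↦ ?_
    rw [Complex.ofReal_neg, Complex.ofReal_log (by linarith [rpow_neg_lt_one hx p.2]),
      Complex.ofReal_sub, Complex.ofReal_cpow (by positivity)]
    simp
  have hr : ∑' n : ℕ, 1 / ((n : ℂ) + 1) ^ (x : ℂ) =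
      ((∑' n : ℕ, ((n : ℝ) + 1) ^ (-x) : ℝ) : ℂ) := by
    rw [Complex.ofReal_tsum]
    refine tsum_congr fun n ↦ ?_
    rw [Complex.ofReal_cpow (by positivity)]
    simp [Complex.cpow_neg]
  rw [hl, hr, ← Complex.ofReal_exp, Complex.ofReal_inj] at h
  rw [← h, Real.log_exp]

theorem alphaSig_dirichlet_real_zeta_pow (x : ℝ) (hx : 1 < x) :
    1 < ∑' n : ℕ, ((n : ℝ) + 1) ^ (-x) ∧
      ∀ z : ℂ, ∑' n : ℕ, alphaSig (n + 1) z / ((n : ℂ) + 1) ^ (x : ℂ) =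
        Complex.exp (z * Real.log (∑' n : ℕ, ((n : ℝ) + 1) ^ (-x))) := by
  refine ⟨one_lt_zeta hx, fun z ↦ ?_⟩
  rw [← tsum_primes_neg_log hx, ← tsum_sigTerm hx z,
    (summable_norm_sigTerm hx z).of_norm.tsum_eq_zero_add, sigTerm_zero hx, zero_add]
  refine tsum_congr fun n ↦ ?_
  rw [sigTerm, Complex.ofReal_cpow (by positivity), div_eq_mul_inv]
  simp [Complex.cpow_neg]
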